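/- For every integer k ≥ 2 and all reals x_1, x_2 ≥ 0 with x_1 + x_2 ≤ 1, one has D_k(x_1, x_2) ≤ D_{k+1}(x_1, x_2), where D_k(x_1, x_2) denotes the supremum of d_k(x_1, x_2, x_3, …, x_k) over all (x_3, …, x_k) such that (x_1, x_2, x_3, …, x_k) lies in the standard simplex Δ_k. -/

import Mathlib

/-- The cumulative distribution function `F(z) = min((11/6)z, 1)` of the ICUT scheme. -/
noncomputable def Fcdf (z : ℝ) : ℝ := min ((11 / 6) * z) 1

/-- The probability density `F′(z)`: `11/6` for `z < 6/11` and `0` for `z ≥ 6/11`. -/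
noncomputable def Fpdf (z : ℝ) : ℝ := if z < 6 / 11 then 11 / 6 else 0

/-- The density `d_k(x)` with which ICUT cuts an infinitesimal `1,2`-aligned segment at
`x = (x_1, …, x_k)`:
`d_k(x) = (1/k!) ∑_σ [ F′(x_1) ∏_{i : σ(i) < σ(1)} (1 − F(x_i))
                      + F′(x_2) ∏_{i : σ(i) < σ(2)} (1 − F(x_i)) ]`. -/
noncomputable def dDensity (k : ℕ) (hk : 2 ≤ k) (x : Fin k → ℝ) : ℝ :=
  ((Nat.factorial k : ℝ))⁻¹ *
    ∑ σ : Equiv.Perm (Fin k),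
      (Fpdf (x ⟨0, by omega⟩) *
          ∏ i ∈ Finset.univ.filter (fun i => σ i < σ ⟨0, by omega⟩), (1 - Fcdf (x i)) +
        Fpdf (x ⟨1, by omega⟩) *
          ∏ i ∈ Finset.univ.filter (fun i => σ i < σ ⟨1, by omega⟩), (1 - Fcdf (x i)))

/-- `C_k(x_1, x_2) = d_k(x_1, x_2, c, …, c)` where `c = (1 − x_1 − x_2)/(k − 2)`. -/
noncomputable def Cdensity (k : ℕ) (hk : 3 ≤ k) (x1 x2 : ℝ) : ℝ :=
  dDensity k (by omega)
    (fun i => if (i : ℕ) = 0 then x1 else if (i : ℕ) = 1 then x2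
      else (1 - x1 - x2) / ((k : ℝ) - 2))

/-!
An agent with coordinate `0` has `F 0 = 0`, hence contributes the factor `1` to every product in
which it occurs. Deleting it from a uniformly random order of `k + 1` agents leaves a uniformly
random order of the other `k`, so `d_{k+1}(x_1, …, x_k, 0) = d_k(x_1, …, x_k)`. Since `(x, 0)` lies
in `Δ_{k+1}` when `x` lies in `Δ_k`, every value of `d_k` over `(x_1, x_2)` is a value of `d_{k+1}`.
-/

open Finset Equiv
open scoped BigOperators

/-- The average, over all orders `σ` of the index set, of the product of the weights of the indices
that precede `j`. With `w i = 1 - F(x_i)` it is the coefficient of `F′(x_j)` in the density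
`d_k(x)`, for `j = 1, 2`. -/
noncomputable def expectProdBefore {ι R : Type*} [Fintype ι] [LinearOrder ι] [CommSemiring R]
    [Module ℚ≥0 R] (w : ι → R) (j : ι) : R :=
  𝔼 σ : Perm ι, ∏ i with σ i < σ j, w i

theorem expectProdBefore_mem_Icc {ι R : Type*} [Fintype ι] [LinearOrder ι] [CommSemiring R]
    [PartialOrder R] [IsOrderedRing R] [Module ℚ≥0 R] [PosSMulMono ℚ≥0 R] {w : ι → R}
    (hw : ∀ i, w i ∈ Set.Icc 0 1) (j : ι) : expectProdBefore w j ∈ Set.Icc 0 1 :=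
  ⟨expect_nonneg fun _ _ ↦ prod_nonneg fun i _ ↦ (hw i).1,
    expect_le univ_nonempty fun _ _ ↦ prod_le_one (fun i _ ↦ (hw i).1) fun i _ ↦ (hw i).2⟩

section InsertPerm

variable {n : ℕ}

/-- The order of `n + 1` elements in which `a` has rank `p` and the other elements, which are
indexed by `a.succAbove`, are ordered among themselves by `σ`. -/
def insertPerm (a p : Fin (n + 1)) (σ : Perm (Fin n)) : Perm (Fin (n + 1)) :=
  (finSuccEquiv' a).trans ((optionCongr σ).trans (finSuccEquiv' p).symm)

@[simp]
theorem insertPerm_apply_self (a p : Fin (n + 1)) (σ : Perm (Fin n)) : insertPerm a p σ a = p := by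
  simp [insertPerm]

@[simp]
theorem insertPerm_apply_succAbove (a p : Fin (n + 1)) (σ : Perm (Fin n)) (i : Fin n) :
    insertPerm a p σ (a.succAbove i) = p.succAbove (σ i) := by
  simp [insertPerm]

theorem insertPerm_bijective (a : Fin (n + 1)) :
    Function.Bijective fun q : Fin (n + 1) × Perm (Fin n) ↦ insertPerm a q.1 q.2 := by
  rw [Fintype.bijective_iff_injective_and_card]
  refine ⟨?_, by simp [Fintype.card_perm, Nat.factorial_succ]⟩
  rintro ⟨p, σ⟩ ⟨q, τ⟩ h
  obtain rfl : p = q := by simpa using DFunLike.congr_fun h a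
  obtain rfl : σ = τ := Equiv.ext fun i ↦ by simpa using DFunLike.congr_fun h (a.succAbove i)
  rfl

theorem prod_insertPerm_lt {M : Type*} [CommMonoid M] {w : Fin (n + 1) → M} {a : Fin (n + 1)}
    (ha : w a = 1) (p : Fin (n + 1)) (σ : Perm (Fin n)) (j : Fin n) :
    ∏ i with insertPerm a p σ i < insertPerm a p σ (a.succAbove j), w i =
      ∏ i with σ i < σ j, w (a.succAbove i) := by
  simp [prod_filter, Fin.prod_univ_succAbove _ a, ha]

theorem expectProdBefore_succAbove {R : Type*} [CommSemiring R] [Module ℚ≥0 R]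
    {w : Fin (n + 1) → R} {a : Fin (n + 1)} (ha : w a = 1) (j : Fin n) :
    expectProdBefore w (a.succAbove j) = expectProdBefore (w ∘ a.succAbove) j := calc
  𝔼 τ : Perm (Fin (n + 1)), ∏ i with τ i < τ (a.succAbove j), w i
    = 𝔼 q : Fin (n + 1) × Perm (Fin n), ∏ i with q.2 i < q.2 j, w (a.succAbove i) :=
      (Fintype.expect_bijective _ (insertPerm_bijective a) _ _
        fun q ↦ (prod_insertPerm_lt ha q.1 q.2 j).symm).symm
  _ = 𝔼 _p : Fin (n + 1), expectProdBefore (w ∘ a.succAbove) j := expect_product _ _ _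
  _ = expectProdBefore (w ∘ a.succAbove) j := Fintype.expect_const _

end InsertPerm

theorem succAbove_mk_of_lt {n m : ℕ} {a : Fin (n + 1)} (hm : m < n) (h : m < (a : ℕ)) :
    a.succAbove ⟨m, hm⟩ = ⟨m, hm.trans n.lt_succ_self⟩ :=
  Fin.succAbove_of_castSucc_lt _ _ (Fin.lt_def.2 h)

theorem insertNth_mk_of_lt {α : Type*} {n m : ℕ} {a : Fin (n + 1)} (hm : m < n) (c : α)
    (y : Fin n → α) (h : m < (a : ℕ)) :
    a.insertNth (α := fun _ ↦ α) c y ⟨m, hm.trans n.lt_succ_self⟩ = y ⟨m, hm⟩ := by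
  rw [← succAbove_mk_of_lt hm h, Fin.insertNth_apply_succAbove]

theorem insertNth_zero_mem_stdSimplex_iff {R : Type*} [Semiring R] [PartialOrder R] {n : ℕ}
    {a : Fin (n + 1)} {y : Fin n → R} :
    a.insertNth 0 y ∈ stdSimplex R (Fin (n + 1)) ↔ y ∈ stdSimplex R (Fin n) := by
  simp [stdSimplex, Fin.forall_iff_succAbove a, Fin.sum_univ_succAbove _ a]

theorem Fcdf_zero : Fcdf 0 = 0 := by
  simp [Fcdf]

theorem one_sub_Fcdf_mem_Icc {z : ℝ} (hz : 0 ≤ z) : 1 - Fcdf z ∈ Set.Icc 0 1 :=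
  ⟨sub_nonneg.2 (min_le_right _ _), sub_le_self _ (le_min (by positivity) zero_le_one)⟩

theorem Fpdf_mem_Icc (z : ℝ) : Fpdf z ∈ Set.Icc 0 (11 / 6) := by
  unfold Fpdf
  split_ifs <;> norm_num

section Density

variable {k : ℕ} (hk : 2 ≤ k)

theorem dDensity_eq_expectProdBefore (x : Fin k → ℝ) :
    dDensity k hk x =
      Fpdf (x ⟨0, by omega⟩) * expectProdBefore (fun i ↦ 1 - Fcdf (x i)) ⟨0, by omega⟩ +
        Fpdf (x ⟨1, by omega⟩) * expectProdBefore (fun i ↦ 1 - Fcdf (x i)) ⟨1, by omega⟩ := by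
  simp only [dDensity, expectProdBefore, Fintype.expect_eq_sum_div_card, Fintype.card_perm,
    Fintype.card_fin, sum_add_distrib, ← mul_sum]
  ring

theorem dDensity_mem_Icc {x : Fin k → ℝ} (hx : ∀ i, 0 ≤ x i) :
    dDensity k hk x ∈ Set.Icc 0 (11 / 3) := by
  have term_mem (j : Fin k) :
      Fpdf (x j) * expectProdBefore (fun i ↦ 1 - Fcdf (x i)) j ∈ Set.Icc 0 (11 / 6) := by
    obtain ⟨hF₀, hF₁⟩ := Fpdf_mem_Icc (x j)
    obtain ⟨hE₀, hE₁⟩ := expectProdBefore_mem_Icc (fun i ↦ one_sub_Fcdf_mem_Icc (hx i)) j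
    exact ⟨mul_nonneg hF₀ hE₀, (mul_le_of_le_one_right hF₀ hE₁).trans hF₁⟩
  rw [dDensity_eq_expectProdBefore]
  obtain ⟨nonneg₀, le₀⟩ := term_mem ⟨0, by omega⟩
  obtain ⟨nonneg₁, le₁⟩ := term_mem ⟨1, by omega⟩
  constructor <;> linarith

theorem dDensity_insertNth_zero (y : Fin k → ℝ) {a : Fin (k + 1)} (ha : 2 ≤ (a : ℕ)) :
    dDensity (k + 1) (by omega) (a.insertNth 0 y) = dDensity k hk y := by
  have expect_eq (j : Fin k) :
      expectProdBefore (fun i ↦ 1 - Fcdf (a.insertNth (α := fun _ ↦ ℝ) 0 y i)) (a.succAbove j) =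
        expectProdBefore (fun i ↦ 1 - Fcdf (y i)) j := by
    rw [expectProdBefore_succAbove (by simp [Fcdf_zero])]
    simp [Function.comp_def]
  have h₀ : 0 < (a : ℕ) := Nat.zero_lt_of_lt ha
  rw [dDensity_eq_expectProdBefore, dDensity_eq_expectProdBefore, insertNth_mk_of_lt _ _ _ h₀,
    insertNth_mk_of_lt _ _ _ ha, ← expect_eq, ← expect_eq, succAbove_mk_of_lt _ h₀,
    succAbove_mk_of_lt _ ha]

end Density

/-- `D_k(x_1, x_2) ≤ D_{k+1}(x_1, x_2)`, where `D_k(x_1, x_2)` is the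
supremum of `d_k(x)` over points `x` of the standard simplex whose first two
coordinates are `x_1` and `x_2`. -/
theorem Dsup_mono (k : ℕ) (hk : 2 ≤ k) (x1 x2 : ℝ) (h1 : 0 ≤ x1) (h2 : 0 ≤ x2)
    (h12 : x1 + x2 ≤ 1) :
    sSup {d : ℝ | ∃ y : Fin k → ℝ, y ∈ stdSimplex ℝ (Fin k) ∧
        y ⟨0, by omega⟩ = x1 ∧ y ⟨1, by omega⟩ = x2 ∧ d = dDensity k hk y} ≤
    sSup {d : ℝ | ∃ y : Fin (k + 1) → ℝ, y ∈ stdSimplex ℝ (Fin (k + 1)) ∧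
        y ⟨0, by omega⟩ = x1 ∧ y ⟨1, by omega⟩ = x2 ∧ d = dDensity (k + 1) (by omega) y} := by
  refine Real.sSup_le ?_ (Real.sSup_nonneg ?_)
  · rintro _ ⟨y, hy, rfl, rfl, rfl⟩
    have hbdd : BddAbove {d : ℝ | ∃ z : Fin (k + 1) → ℝ, z ∈ stdSimplex ℝ (Fin (k + 1)) ∧
        z ⟨0, by omega⟩ = y ⟨0, by omega⟩ ∧ z ⟨1, by omega⟩ = y ⟨1, by omega⟩ ∧
        d = dDensity (k + 1) (by omega) z} := by
      refine ⟨11 / 3, ?_⟩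
      rintro _ ⟨z, hz, -, -, rfl⟩
      exact (dDensity_mem_Icc _ hz.1).2
    exact le_csSup hbdd ⟨(Fin.last k).insertNth 0 y, insertNth_zero_mem_stdSimplex_iff.2 hy,
      insertNth_mk_of_lt _ _ _ (Nat.zero_lt_of_lt hk), insertNth_mk_of_lt _ _ _ hk,
      (dDensity_insertNth_zero hk y hk).symm⟩
  -- For `k = 2` and `x1 + x2 < 1` the left-hand set is empty, with `sSup` equal to `0`.
  · rintro _ ⟨y, hy, -, -, rfl⟩
    exact (dDensity_mem_Icc _ hy.1).1
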